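/- Let d ≥ 6 be an integer, G a graph, u ∈ V(G), and let Q1, Q2 ⊆ N^{≥d}_G(u) be nonempty vertex sets. If the distance between Q1 and Q2 in the induced subgraph G[N^{≥4}_G(u)] is at least d (in particular, if there is no path between them in this induced subgraph), then d_G(Q1,Q2) ≥ d. -/

import Mathlib

open SimpleGraph

/-!
A walk that joins two vertices at distance at least `d` from `u` and passes through a vertex `w`
with `d(u, w) < r` has length at least `2 * (d - (r - 1))`: it covers `d - (r - 1)` both on the way
to `w` and on the way back. When `2 * (r - 1) ≤ d` this is at least `d`, so a walk shorter than `d`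
stays in `{v | r ≤ d(u, v)}` and is therefore a walk of the induced subgraph on that set.
-/

section

variable {V : Type*} {G : SimpleGraph V} {x y : V}

theorem edist_add_edist_le_length (p : G.Walk x y) {w : V} (hw : w ∈ p.support) :
    G.edist x w + G.edist w y ≤ p.length := by
  classical
  calc
    G.edist x w + G.edist w y ≤ (p.takeUntil w hw).length + (p.dropUntil w hw).length :=
      add_le_add (edist_le _) (edist_le _)
    _ = p.length := by
      rw [← Nat.cast_add, ← Walk.length_append, p.take_spec hw]

theorem edist_add_edist_le_two_mul_edist_add_length (u : V) (p : G.Walk x y) {w : V}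
    (hw : w ∈ p.support) :
    G.edist u x + G.edist u y ≤ 2 * G.edist u w + p.length := by
  calc
    G.edist u x + G.edist u y ≤ (G.edist u w + G.edist w x) + (G.edist u w + G.edist w y) :=
      add_le_add G.edist_triangle G.edist_triangle
    _ = 2 * G.edist u w + (G.edist x w + G.edist w y) := by
      rw [G.edist_comm (u := w) (v := x)]
      ring
    _ ≤ 2 * G.edist u w + p.length := by
      gcongr
      exact edist_add_edist_le_length p hw

theorem le_edist_of_mem_support_of_length_lt {r d : ℕ∞} (hrd : 2 * r ≤ d + 2) {u : V}
    (hx : d ≤ G.edist u x) (hy : d ≤ G.edist u y) (p : G.Walk x y) (hp : p.length < d) {w : V}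
    (hw : w ∈ p.support) :
    r ≤ G.edist u w := by
  have hdetour : d + d ≤ 2 * G.edist u w + p.length :=
    (add_le_add hx hy).trans (edist_add_edist_le_two_mul_edist_add_length u p hw)
  by_contra! hwr
  lift G.edist u w to ℕ using hwr.ne_top with e
  cases d <;> cases r <;> norm_cast at hrd hp hdetour hwr
  omega

theorem edist_induce_le_length {s : Set V} (p : G.Walk x y) (hp : ∀ w ∈ p.support, w ∈ s) :
    (G.induce s).edist ⟨x, hp x p.start_mem_support⟩ ⟨y, hp y p.end_mem_support⟩ ≤ p.length := by
  have hlength : (p.induce s hp).length = p.length :=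
    (Walk.length_map _ _).symm.trans (congrArg Walk.length (p.map_induce hp))
  exact hlength ▸ edist_le (p.induce s hp)

theorem stmt5_general (r d : ℕ∞) (hrd : 2 * r ≤ d + 2) (G : SimpleGraph V) (u : V)
    (Q1 Q2 : Set V) (hQ1 : Q1 ⊆ {v : V | d ≤ G.edist u v}) (hQ2 : Q2 ⊆ {v : V | d ≤ G.edist u v})
    (hfar : ∀ x y : {v : V | r ≤ G.edist u v}, (x : V) ∈ Q1 → (y : V) ∈ Q2 →
      d ≤ (G.induce {v : V | r ≤ G.edist u v}).edist x y) :
    ∀ x ∈ Q1, ∀ y ∈ Q2, d ≤ G.edist x y := by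
  intro x hx y hy
  by_contra! hlt
  obtain ⟨p, hp⟩ := exists_walk_of_edist_ne_top hlt.ne_top
  rw [← hp] at hlt
  have hsupport : ∀ w ∈ p.support, w ∈ {v : V | r ≤ G.edist u v} := fun _ hw ↦
    le_edist_of_mem_support_of_length_lt hrd (hQ1 hx) (hQ2 hy) p hlt hw
  exact hlt.not_ge ((hfar _ _ hx hy).trans (edist_induce_le_length p hsupport))

end

/-- Let `d ≥ 6`, `u ∈ V(G)`, and let `Q₁, Q₂ ⊆ N^{≥d}_G(u)` be nonempty. If the distance
between `Q₁` and `Q₂` in the induced subgraph `G[N^{≥4}_G(u)]` is at least `d` (this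
includes the case where there is no path between them in this induced subgraph, the
distance then being `∞`), then `d_G(Q₁,Q₂) ≥ d`, i.e. every vertex of `Q₁` is at distance
at least `d` in `G` from every vertex of `Q₂`. -/
theorem stmt5 {V : Type*} [Fintype V] (d : ℕ) (hd : 6 ≤ d) (G : SimpleGraph V) (u : V)
    (Q1 Q2 : Set V) (hQ1ne : Q1.Nonempty) (hQ2ne : Q2.Nonempty)
    (hQ1 : Q1 ⊆ {v : V | (d : ℕ∞) ≤ G.edist u v})
    (hQ2 : Q2 ⊆ {v : V | (d : ℕ∞) ≤ G.edist u v})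
    (hfar : ∀ x y : {v : V | 4 ≤ G.edist u v},
      (↑x : V) ∈ Q1 → (↑y : V) ∈ Q2 →
        (d : ℕ∞) ≤ (G.induce {v : V | 4 ≤ G.edist u v}).edist x y) :
    ∀ x ∈ Q1, ∀ y ∈ Q2, (d : ℕ∞) ≤ G.edist x y := by
  have hrd : 2 * (4 : ℕ∞) ≤ d + 2 := by
    norm_cast
    omega
  exact stmt5_general 4 d hrd G u Q1 Q2 hQ1 hQ2 hfar
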